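/- Geometric Divergence: Let D be a probability distribution over a set F of information resources and let F ∼ D. Identify the target set t ⊆ Ω, |t| = k, with its k-hot indicator vector 𝐭 ∈ {0,1}^n (so ‖𝐭‖ = √k), and let θ be the angle between 𝐭 and the vector v = E_{F∼D}[P̄_F] ∈ ℝ^n (i.e., cos θ = ⟨𝐭, v⟩/(‖𝐭‖·‖v‖)). Then for any q_min ∈ (0,1], Pr(q(t,F) ≥ q_min) ≤ √k · cos θ / q_min = ‖𝐭‖ cos θ / q_min. -/

import Mathlib

/-!
By linearity of expectation, `q(t, F) = ⟪𝐭, P̄_F⟫` has mean `⟪𝐭, v⟫ = ‖𝐭‖ ‖v‖ cos θ`, so Markov's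
inequality bounds the probability by `‖𝐭‖ ‖v‖ cos θ / q_min`. The average `v` is again a probability
vector, hence `‖v‖₂ ≤ ‖v‖₁ = 1`, and the factor `‖v‖` may be dropped because `cos θ` is nonnegative.
-/

open MeasureTheory

open InnerProductGeometry (angle)
open scoped RealInnerProductSpace

section InnerProductSpace

variable {E : Type*} [NormedAddCommGroup E] [InnerProductSpace ℝ E]

lemma inner_le_norm_mul_cos_angle {a v : E} (hav : 0 ≤ ⟪a, v⟫) (hv : ‖v‖ ≤ 1) :
    ⟪a, v⟫ ≤ ‖a‖ * Real.cos (angle a v) := by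
  have hcos : 0 ≤ Real.cos (angle a v) := by
    rw [InnerProductGeometry.cos_angle]
    positivity
  calc ⟪a, v⟫ = ‖a‖ * Real.cos (angle a v) * ‖v‖ := by
        rw [← InnerProductGeometry.cos_angle_mul_norm_mul_norm a v]
        ring
    _ ≤ ‖a‖ * Real.cos (angle a v) := mul_le_of_le_one_right (by positivity) hv

lemma measureReal_le_inner_le_norm_mul_cos_angle_div [CompleteSpace E] {α : Type*}
    [MeasurableSpace α] {μ : Measure α} {X : α → E} (hX : Integrable X μ) {a : E}
    (hnonneg : 0 ≤ᵐ[μ] fun x => ⟪a, X x⟫) (hmean : ‖∫ x, X x ∂μ‖ ≤ 1) {c : ℝ} (hc : 0 < c) :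
    μ.real {x | c ≤ ⟪a, X x⟫} ≤ ‖a‖ * Real.cos (angle a (∫ x, X x ∂μ)) / c := by
  have hint : ∫ x, ⟪a, X x⟫ ∂μ = ⟪a, ∫ x, X x ∂μ⟫ := integral_inner hX a
  rw [le_div_iff₀' hc]
  calc c * μ.real {x | c ≤ ⟪a, X x⟫} ≤ ∫ x, ⟪a, X x⟫ ∂μ :=
        mul_meas_ge_le_integral_of_nonneg hnonneg (hX.const_inner a) c
    _ = ⟪a, ∫ x, X x ∂μ⟫ := hint
    _ ≤ ‖a‖ * Real.cos (angle a (∫ x, X x ∂μ)) :=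
        inner_le_norm_mul_cos_angle (hint ▸ integral_nonneg_of_ae hnonneg) hmean

end InnerProductSpace

section FiniteCoordinates

variable {Ω : Type*} [Fintype Ω]

/-- The indicator vector `𝐭` of the target set `t`, as a vector of the Euclidean space `ℝ^Ω`. -/
noncomputable def targetVec (t : Finset Ω) : EuclideanSpace ℝ Ω :=
  WithLp.toLp 2 (Set.indicator t 1)

lemma inner_targetVec (t : Finset Ω) (x : EuclideanSpace ℝ Ω) :
    ⟪targetVec t, x⟫ = ∑ ω ∈ t, x ω := by
  classical
  simp [targetVec, PiLp.inner_apply, Set.indicator_apply]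

lemma norm_targetVec (t : Finset Ω) : ‖targetVec t‖ = √t.card := by
  classical
  simp [targetVec, EuclideanSpace.norm_eq, Set.indicator_apply]

-- For `t = ∅` or `x = 0` both sides are `0`: `angle` is then `π / 2`, and the quotient is `0 / 0`.
lemma cos_angle_targetVec (t : Finset Ω) (x : EuclideanSpace ℝ Ω) :
    Real.cos (angle (targetVec t) x) = (∑ ω ∈ t, x ω) / (√t.card * √(∑ ω, x ω ^ 2)) := by
  rw [InnerProductGeometry.cos_angle, inner_targetVec, norm_targetVec, EuclideanSpace.norm_eq]
  simp only [Real.norm_eq_abs, sq_abs]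

lemma sum_sq_integral_le_one {α : Type*} [MeasurableSpace α] {μ : Measure α}
    [IsProbabilityMeasure μ] {X : α → Ω → ℝ} (hX : ∀ ω, Integrable (fun x => X x ω) μ)
    (hX0 : ∀ ω, 0 ≤ᵐ[μ] fun x => X x ω) (hX1 : ∀ᵐ x ∂μ, ∑ ω, X x ω ≤ 1) :
    ∑ ω, (∫ x, X x ω ∂μ) ^ 2 ≤ 1 := by
  have hmean0 : ∀ ω, 0 ≤ ∫ x, X x ω ∂μ := fun ω => integral_nonneg_of_ae (hX0 ω)
  have hmean1 : ∑ ω, ∫ x, X x ω ∂μ ≤ 1 :=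
    calc ∑ ω, ∫ x, X x ω ∂μ = ∫ x, ∑ ω, X x ω ∂μ :=
          (integral_finsetSum _ fun ω _ => hX ω).symm
      _ ≤ ∫ _, 1 ∂μ :=
          integral_mono_ae (integrable_finsetSum _ fun ω _ => hX ω) (integrable_const 1) hX1
      _ = 1 := by simp
  calc ∑ ω, (∫ x, X x ω ∂μ) ^ 2 ≤ (∑ ω, ∫ x, X x ω ∂μ) ^ 2 :=
        Finset.sum_sq_le_sq_sum_of_nonneg fun ω _ => hmean0 ω
    _ ≤ 1 := pow_le_one₀ (Finset.sum_nonneg fun ω _ => hmean0 ω) hmean1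

end FiniteCoordinates

theorem geometric_divergence_general {Ω F : Type*} [Fintype Ω] [MeasurableSpace F]
    {Pbar : F → Ω → ℝ} {D : Measure F} {t : Finset Ω}
    (hq : 0 ≤ᵐ[D] fun f => ∑ ω ∈ t, Pbar f ω) (hint : ∀ ω, Integrable (fun f => Pbar f ω) D)
    {v : Ω → ℝ} (hv : ∀ ω, v ω = ∫ f, Pbar f ω ∂D) (hv1 : ∑ ω, v ω ^ 2 ≤ 1) {θ : ℝ}
    (hθ : Real.cos θ = (∑ ω ∈ t, v ω) / (√t.card * √(∑ ω, v ω ^ 2)))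
    {qmin : ℝ} (hqmin : 0 < qmin) :
    D.real {f | qmin ≤ ∑ ω ∈ t, Pbar f ω} ≤ √t.card * Real.cos θ / qmin := by
  let X : F → EuclideanSpace ℝ Ω := fun f => WithLp.toLp 2 (Pbar f)
  have hX : Integrable X D := Integrable.of_eval_piLp hint
  have hmean : ∫ f, X f ∂D = WithLp.toLp 2 v := by
    ext ω
    exact (eval_integral_piLp hint ω).trans (hv ω).symm
  have hnorm : ‖∫ f, X f ∂D‖ ≤ 1 := by
    simpa [hmean, EuclideanSpace.norm_eq] using hv1
  have hbound := measureReal_le_inner_le_norm_mul_cos_angle_div hX (a := targetVec t)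
    (by simpa only [inner_targetVec] using hq) hnorm hqmin
  simpa only [inner_targetVec, norm_targetVec, hmean, cos_angle_targetVec, hθ] using hbound

/-- **Geometric Divergence.**
Identifying the target set `t` (of size `k`) with its `k`-hot indicator vector
`𝐭 ∈ {0,1}^Ω` (so `‖𝐭‖ = √k`), and letting `θ` be the angle between `𝐭` and
`v = E_{F∼D}[P̄_F]` (so `cos θ = ⟨𝐭,v⟩/(‖𝐭‖·‖v‖)`), we have
`Pr(q(t,F) ≥ q_min) ≤ √k · cos θ / q_min`. -/
theorem geometric_divergence
    {Ω F : Type*} [Fintype Ω] [MeasurableSpace F]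
    (Pbar : F → Ω → ℝ)
    (hP0 : ∀ f ω, 0 ≤ Pbar f ω)
    (hP1 : ∀ f, ∑ ω, Pbar f ω = 1)
    (D : Measure F) [IsProbabilityMeasure D]
    (t : Finset Ω) (k : ℕ) (hk : t.card = k)
    (hmeas : Measurable fun f => ∑ ω ∈ t, Pbar f ω)
    (hint : ∀ ω, Integrable (fun f => Pbar f ω) D)
    (v : Ω → ℝ) (hv : ∀ ω, v ω = ∫ f, Pbar f ω ∂D)
    (θ : ℝ)
    (hθ : Real.cos θ =
      (∑ ω ∈ t, v ω) / (Real.sqrt k * Real.sqrt (∑ ω, (v ω) ^ 2)))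
    (qmin : ℝ) (hqmin : qmin ∈ Set.Ioc (0 : ℝ) 1) :
    (D {f | qmin ≤ ∑ ω ∈ t, Pbar f ω}).toReal
      ≤ Real.sqrt k * Real.cos θ / qmin := by
  subst hk
  have hv1 : ∑ ω, v ω ^ 2 ≤ 1 := by
    simpa only [hv] using sum_sq_integral_le_one hint (fun ω => .of_forall (hP0 · ω))
      (.of_forall fun f => (hP1 f).le)
  exact geometric_divergence_general (.of_forall fun f => Finset.sum_nonneg fun ω _ => hP0 f ω)
    hint hv hv1 hθ hqmin.1
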